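/- Let G be a Hajós graph and let (G1, G2) be a 5-separation in G such that (G1, V(G1 ∩ G2)) is planar. Then G1 − V(G1 ∩ G2) is not isomorphic to K3 (the triangle). -/

import Mathlib

/-!
Let `S` be the common vertex set of the two sides and let `abc` be a triangle left after deleting `S`
from the planar side; all further neighbours of `a`, `b`, `c` lie in `S`.

*Planarity.*  Add a vertex `z` adjacent to all of `S`.  If two triangle vertices had two common
neighbours in `S`, there would be a `K3,3`-subdivision, or a `K5`-subdivision when the third vertex
has just the same two neighbours; if all three had a common neighbour, there would be a
`K5`-subdivision on `a`, `b`, `c`, `z` and that neighbour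
(`SepTriangle.common_unique`, `SepTriangle.no_triple`).  As `|S| = 5` and Hajós graphs have minimum
degree at least four, counting leaves few possibilities for the numbers of neighbours in `S`:
`2, 2, *` with a vertex shared by the first two, `2, 3, 3` with every pair sharing a vertex, and
`3, 2, 2` with the first sharing a vertex with each of the others (`SepTriangle.no_counts`).

*Reductions.*  Each of these is excluded by minimality.  A smaller graph is built whose
`4`-colouring extends to the whole graph, so it must contain a `K5`-subdivision, and this
subdivision is rerouted through the deleted vertices.

* `IsHajos.no_degree_four_edge`: adjacent degree-four vertices `x`, `y` with private neighbours `p`,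
  `q` and two common neighbours are deleted and the edge `pq` is added; it stands for the path
  `p x y q`.
* `IsHajos.no_star_triangle`: a triangle `xyz` is deleted, and a common neighbour `t` of `y` and `z`
  is joined to the outer neighbours of `x`.  If the subdivision uses at most two new edges at `t`,
  they are replaced by two disjoint paths through the triangle.  If it uses three, then `t` has at
  most one further neighbour in the subdivision (all degrees there are at most four, see
  `HasK5Subdivision.exists_sparse`), and `x` takes over the role of `t`.

Replacing an edge by a path of length two is handled one vertex at a time by `shortcut` and
`HasK5Subdivision.of_shortcut`.
-/

open SimpleGraph

/-- The internal vertices of a walk: its support with the two endpoints removed. -/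
def walkInterior {V : Type} {G : SimpleGraph V} {u v : V} (p : G.Walk u v) : List V :=
  p.support.tail.dropLast

/-- `G` contains a subdivision of `K5`: five branch vertices joined by pairwise
internally disjoint paths whose interiors avoid all branch vertices. -/
def HasK5Subdivision {V : Type} (G : SimpleGraph V) : Prop :=
  ∃ b : Fin 5 → V, Function.Injective b ∧
    ∃ P : ∀ i j : Fin 5, G.Walk (b i) (b j),
      (∀ i j : Fin 5, i < j → (P i j).IsPath) ∧
      (∀ i j : Fin 5, i < j → ∀ k : Fin 5, b k ∉ walkInterior (P i j)) ∧
      (∀ i j i' j' : Fin 5, i < j → i' < j' → (i, j) ≠ (i', j') →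
        ∀ x ∈ walkInterior (P i j), x ∉ (P i' j').support)

/-- `G` contains a subdivision of `K3,3`. -/
def HasK33Subdivision {V : Type} (G : SimpleGraph V) : Prop :=
  ∃ a b : Fin 3 → V, Function.Injective a ∧ Function.Injective b ∧
    (∀ i j : Fin 3, a i ≠ b j) ∧
    ∃ P : ∀ i j : Fin 3, G.Walk (a i) (b j),
      (∀ i j : Fin 3, (P i j).IsPath) ∧
      (∀ i j k : Fin 3, a k ∉ walkInterior (P i j) ∧ b k ∉ walkInterior (P i j)) ∧
      (∀ i j i' j' : Fin 3, (i, j) ≠ (i', j') →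
        ∀ x ∈ walkInterior (P i j), x ∉ (P i' j').support)

/-- A finite graph is planar iff it contains no subdivision of `K5` or of `K3,3`
(Kuratowski's theorem). -/
def IsPlanar {V : Type} (G : SimpleGraph V) : Prop :=
  ¬ HasK5Subdivision G ∧ ¬ HasK33Subdivision G

/-- The graph obtained from `G` by adding a new apex vertex joined to all vertices of `S`. -/
def apexGraph {V : Type} (G : SimpleGraph V) (S : Set V) : SimpleGraph (Option V) :=
  SimpleGraph.fromRel (fun x y =>
    (∃ a b : V, x = some a ∧ y = some b ∧ G.Adj a b) ∨
    (x = none ∧ ∃ a ∈ S, y = some a))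

/-- `(G, S)` is planar: `G` can be drawn in a closed disc with no edge crossings and with
`S` on the boundary of the disc.  Equivalently, the graph obtained by adding an apex
vertex adjacent to all of `S` is planar. -/
def PairPlanar {V : Type} (G : SimpleGraph V) (S : Set V) : Prop :=
  IsPlanar (apexGraph G S)

/-- `(H, S)` is planar, for a subgraph `H` of an ambient graph. -/
def SubgraphPairPlanar {V : Type} {G : SimpleGraph V} (H : G.Subgraph) (S : Set V) : Prop :=
  PairPlanar H.coe {x : H.verts | (x : V) ∈ S}

/-- A Hajós graph: no `K5`-subdivision, not 4-colorable, and vertex-minimum with these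
two properties (every graph on fewer vertices has a `K5`-subdivision or is 4-colorable). -/
def IsHajos {V : Type} [Fintype V] (G : SimpleGraph V) : Prop :=
  ¬ HasK5Subdivision G ∧ ¬ G.Colorable 4 ∧
    ∀ n : ℕ, n < Fintype.card V → ∀ H : SimpleGraph (Fin n),
      HasK5Subdivision H ∨ H.Colorable 4

/-- `(G1, G2)` is a `k`-separation of `G`: edge-disjoint subgraphs with union `G`,
`|V(G1) ∩ V(G2)| = k`, and each side carries an edge or a private vertex. -/
def IsSeparation {V : Type} {G : SimpleGraph V} (G1 G2 : G.Subgraph) (k : ℕ) : Prop :=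
  G1 ⊔ G2 = ⊤ ∧ Disjoint G1.edgeSet G2.edgeSet ∧
  (G1.verts ∩ G2.verts).ncard = k ∧
  (G1.edgeSet.Nonempty ∨ (G1.verts \ G2.verts).Nonempty) ∧
  (G2.edgeSet.Nonempty ∨ (G2.verts \ G1.verts).Nonempty)

/-- `W` is a wheel with center `w`: it consists of a cycle `C` avoiding `w`, together with
at least three edges (spokes) from `w` to `C`. -/
def IsWheelSubgraph {V : Type} {G : SimpleGraph V} (W : G.Subgraph) (w : V) : Prop :=
  ∃ (u : V) (C : G.Walk u u) (T : Set V), C.IsCycle ∧ w ∉ C.support ∧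
    T ⊆ {x | x ∈ C.support} ∧ 3 ≤ T.ncard ∧
    W.verts = insert w {x | x ∈ C.support} ∧
    W.edgeSet = {e | e ∈ C.edges} ∪ (fun x => s(w, x)) '' T

/-- The subgraph `H` contains an `S`-good wheel: a wheel `W ≤ H` with center `w ∉ S` such
that every vertex of `S ∩ V(W)` is a neighbor of `w` in `H`. -/
def HasGoodWheel {V : Type} {G : SimpleGraph V} (H : G.Subgraph) (S : Set V) : Prop :=
  ∃ (W : G.Subgraph) (w : V), W ≤ H ∧ IsWheelSubgraph W w ∧ w ∉ S ∧
    ∀ s ∈ S, s ∈ W.verts → H.Adj w s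

/-- `G` is `k`-connected: more than `k` vertices, and deleting fewer than `k` vertices
leaves a connected graph. -/
def IsKConnected {V : Type} [Fintype V] (G : SimpleGraph V) (k : ℕ) : Prop :=
  k < Fintype.card V ∧ ∀ X : Set V, X.ncard < k → (G.induce (Xᶜ : Set V)).Connected

/- The six obstruction graphs, with `S = {t1,...,t5} = {0,1,2,3,4}` and the remaining
vertices `u, v, w, z` labelled `5, 6, 7, 8`. -/

def Obs1 : SimpleGraph (Fin 6) :=
  SimpleGraph.fromEdgeSet {s(5,0), s(5,1), s(5,2), s(5,3)}

def Obs2 : SimpleGraph (Fin 6) :=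
  SimpleGraph.fromEdgeSet {s(5,0), s(5,1), s(5,2), s(5,3), s(5,4)}

def Obs3 : SimpleGraph (Fin 7) :=
  SimpleGraph.fromEdgeSet {s(5,6), s(5,0), s(5,1), s(5,2), s(6,0), s(6,2), s(6,3), s(6,4)}

def Obs4 : SimpleGraph (Fin 7) :=
  SimpleGraph.fromEdgeSet {s(5,6), s(5,0), s(5,1), s(5,2), s(6,2), s(6,3), s(6,4)}

def Obs5 : SimpleGraph (Fin 8) :=
  SimpleGraph.fromEdgeSet {s(5,6), s(5,0), s(5,1), s(5,2), s(6,7), s(6,0), s(6,2), s(6,3),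
    s(7,0), s(7,3), s(7,4)}

def Obs6 : SimpleGraph (Fin 9) :=
  SimpleGraph.fromEdgeSet {s(8,5), s(8,6), s(8,7), s(8,0), s(8,1), s(8,4), s(5,6), s(5,1),
    s(5,2), s(6,7), s(6,2), s(6,3), s(7,3), s(7,4)}

/-- The subgraph `G1` (with distinguished set `S`) is isomorphic to the graph `O` on
`Fin n` by an isomorphism carrying `S` exactly onto `SO`. -/
def IsoCarrying {V : Type} {G : SimpleGraph V} (G1 : G.Subgraph) (S : Set V)
    {n : ℕ} (O : SimpleGraph (Fin n)) (SO : Set (Fin n)) : Prop :=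
  ∃ f : G1.coe ≃g O, ∀ x : G1.verts, ((x : V) ∈ S ↔ f x ∈ SO)

/-- `(G1, S)` is one of the six obstruction graphs of Figure 1. -/
def IsObstruction {V : Type} {G : SimpleGraph V} (G1 : G.Subgraph) (S : Set V) : Prop :=
  IsoCarrying G1 S Obs1 {0,1,2,3,4} ∨ IsoCarrying G1 S Obs2 {0,1,2,3,4} ∨
  IsoCarrying G1 S Obs3 {0,1,2,3,4} ∨ IsoCarrying G1 S Obs4 {0,1,2,3,4} ∨
  IsoCarrying G1 S Obs5 {0,1,2,3,4} ∨ IsoCarrying G1 S Obs6 {0,1,2,3,4}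

/-- `G − X + T`: delete the vertices of `X` (with all incident edges) and add the pairs
in `T` as edges. -/
def deleteAdd {V : Type} (G : SimpleGraph V) (X : Set V) (T : Set (V × V)) : SimpleGraph V :=
  SimpleGraph.fromRel (fun a b => (G.Adj a b ∧ a ∉ X ∧ b ∉ X) ∨ (a, b) ∈ T)

/-! ### Subdivisions of `K5` in terms of supports -/

theorem mem_walkInterior_iff {V : Type} {G : SimpleGraph V} {u v : V} {p : G.Walk u v}
    (hp : p.IsPath) (huv : u ≠ v) (w : V) :
    w ∈ walkInterior p ↔ w ∈ p.support ∧ w ≠ u ∧ w ≠ v := by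
  have h1 : p.support = u :: p.support.tail := p.cons_tail_support.symm
  have hne : p.support.tail ≠ [] := by
    intro h
    rw [h] at h1
    have h2 := p.end_mem_support
    rw [h1] at h2
    simp at h2
    exact huv h2.symm
  have hlast : p.support.tail.getLast hne = v := by
    rw [List.getLast_tail]
    exact p.getLast_support
  have h3 : p.support.tail = p.support.tail.dropLast ++ [v] := by
    conv_lhs => rw [← List.dropLast_append_getLast hne, hlast]
  have hnd : (u :: (p.support.tail.dropLast ++ [v])).Nodup := by
    rw [← h3, ← h1]
    exact hp.support_nodup
  have h4 : p.support = u :: (p.support.tail.dropLast ++ [v]) := by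
    rw [← h3, ← h1]
  unfold walkInterior
  rw [h4]
  generalize p.support.tail.dropLast = l at hnd
  simp only [List.nodup_cons, List.nodup_append, List.mem_append,
    List.mem_cons, List.tail_cons, List.dropLast_concat] at *
  grind

/-- A subdivision of `K5`, with the disjointness conditions expressed through supports only. -/
theorem hasK5Subdivision_iff {V : Type} (G : SimpleGraph V) :
    HasK5Subdivision G ↔ ∃ b : Fin 5 → V, Function.Injective b ∧
      ∃ P : ∀ i j : Fin 5, i < j → G.Walk (b i) (b j),
        (∀ i j h, (P i j h).IsPath) ∧
        (∀ i j h k, b k ∈ (P i j h).support → k = i ∨ k = j) ∧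
        (∀ i j i' j' h h', (i, j) ≠ (i', j') → ∀ x ∈ (P i j h).support,
          x ∈ (P i' j' h').support → x = b i ∨ x = b j) := by
  constructor
  · rintro ⟨b, hb, P, h1, h2, h3⟩
    refine ⟨b, hb, fun i j _ => P i j, fun i j h => h1 i j h, ?_, ?_⟩
    · intro i j h k hk
      by_contra hcon
      push Not at hcon
      exact h2 i j h k ((mem_walkInterior_iff (h1 i j h) (hb.ne h.ne) _).2
        ⟨hk, hb.ne hcon.1, hb.ne hcon.2⟩)
    · intro i j i' j' h h' hne x hx hx'
      by_contra hcon
      push Not at hcon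
      exact h3 i j i' j' h h' hne x ((mem_walkInterior_iff (h1 i j h) (hb.ne h.ne) _).2
        ⟨hx, hcon.1, hcon.2⟩) hx'
  · rintro ⟨b, hb, P, h1, h2, h3⟩
    have hQ : ∀ i j, ∃ Q : G.Walk (b i) (b j), ∀ h : i < j, Q = P i j h := by
      intro i j
      rcases lt_trichotomy i j with h | h | h
      · exact ⟨P i j h, fun _ => rfl⟩
      · subst h
        exact ⟨Walk.nil, fun h => absurd h (lt_irrefl _)⟩
      · exact ⟨(P j i h).reverse, fun h' => absurd h' h.asymm⟩
    choose Q hQ using hQ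
    refine ⟨b, hb, Q, ?_, ?_, ?_⟩
    · intro i j h
      rw [hQ i j h]
      exact h1 i j h
    · intro i j h k hk
      rw [hQ i j h, mem_walkInterior_iff (h1 i j h) (hb.ne h.ne)] at hk
      rcases h2 i j h k hk.1 with rfl | rfl
      · exact hk.2.1 rfl
      · exact hk.2.2 rfl
    · intro i j i' j' h h' hne x hx hx'
      rw [hQ i j h, mem_walkInterior_iff (h1 i j h) (hb.ne h.ne)] at hx
      rw [hQ i' j' h'] at hx'
      rcases h3 i j i' j' h h' hne x hx.1 hx' with rfl | rfl
      · exact hx.2.1 rfl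
      · exact hx.2.2 rfl

theorem HasK5Subdivision.map {V W : Type} {H : SimpleGraph V} {G : SimpleGraph W}
    (hH : HasK5Subdivision H) (f : H →g G) (hf : Function.Injective f) :
    HasK5Subdivision G := by
  rw [hasK5Subdivision_iff] at *
  obtain ⟨b, hb, P, h1, h2, h3⟩ := hH
  refine ⟨fun i => f (b i), hf.comp hb, fun i j h => (P i j h).map f, ?_, ?_, ?_⟩
  · intro i j h
    exact (h1 i j h).map hf
  · intro i j h k hk
    rw [Walk.support_map, List.mem_map] at hk
    obtain ⟨y, hy, hyk⟩ := hk
    rw [hf hyk] at hy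
    exact h2 i j h k hy
  · intro i j i' j' h h' hne x hx hx'
    rw [Walk.support_map, List.mem_map] at hx hx'
    obtain ⟨y, hy, rfl⟩ := hx
    obtain ⟨y', hy', hyy⟩ := hx'
    rw [hf hyy] at hy'
    exact (h3 i j i' j' h h' hne y hy hy').imp (congrArg f) (congrArg f)

theorem HasK5Subdivision.mono {V : Type} {H G : SimpleGraph V} (hle : H ≤ G)
    (hH : HasK5Subdivision H) : HasK5Subdivision G :=
  hH.map (Hom.ofLE hle) Function.injective_id

theorem hasK5Subdivision_of_clique {V : Type} {G : SimpleGraph V} (b : Fin 5 → V)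
    (hb : ∀ i j, i < j → G.Adj (b i) (b j)) : HasK5Subdivision G := by
  rw [hasK5Subdivision_iff]
  have hinj : Function.Injective b := by
    intro i j hij
    rcases lt_trichotomy i j with h | h | h
    · exact absurd hij (hb i j h).ne
    · exact h
    · exact absurd hij.symm (hb j i h).ne
  refine ⟨b, hinj, fun i j h => (hb i j h).toWalk, ?_, ?_, ?_⟩
  · intro i j h
    simp [(hb i j h).ne]
  · intro i j h k hk
    simpa [hinj.eq_iff] using hk
  · intro i j i' j' h h' hne x hx hx'
    simpa using hx

/-! ### Undoing a subdivided edge -/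

/-- Delete the vertex `x` (keeping it as an isolated vertex) and add the edge `pq`.  When `x` is
adjacent to `p` and `q`, the new edge is realised by the path `p x q`. -/
def shortcut {V : Type} (G : SimpleGraph V) (x p q : V) : SimpleGraph V where
  Adj u v := u ≠ v ∧ ((G.Adj u v ∧ u ≠ x ∧ v ≠ x) ∨ (u = p ∧ v = q) ∨ (u = q ∧ v = p))
  symm := ⟨fun u v h => ⟨h.1.symm, by
    rcases h.2 with h | h | h
    · exact Or.inl ⟨h.1.symm, h.2.2, h.2.1⟩
    · exact Or.inr (Or.inr ⟨h.2, h.1⟩)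
    · exact Or.inr (Or.inl ⟨h.2, h.1⟩)⟩⟩
  loopless := ⟨fun u h => h.1 rfl⟩

theorem shortcut_adj {V : Type} {G : SimpleGraph V} {x p q u v : V} :
    (shortcut G x p q).Adj u v ↔
      u ≠ v ∧ ((G.Adj u v ∧ u ≠ x ∧ v ≠ x) ∨ (u = p ∧ v = q) ∨ (u = q ∧ v = p)) := Iff.rfl

/-- Rerouting one path: every path of `shortcut G x p q` that does not start at `x` yields a path of
`G` between the same ends, which meets `x` only if the original path uses the edge `pq`. -/
theorem exists_path_of_shortcut {V : Type} {G : SimpleGraph V} {x p q : V}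
    (hp : G.Adj p x) (hq : G.Adj x q) {u v : V} (W : (shortcut G x p q).Walk u v) :
    u ≠ x → W.IsPath → x ∉ W.support ∧ ∃ Q : G.Walk u v, Q.IsPath ∧
      ∀ w ∈ Q.support, w ∈ W.support ∨ (w = x ∧ p ∈ W.support ∧ q ∈ W.support) := by
  induction W with
  | nil =>
    intro hu _
    exact ⟨by simpa using hu.symm, Walk.nil, by simp, by simp⟩
  | @cons u c v h W' ih =>
    intro hu hpath
    rw [Walk.cons_isPath_iff] at hpath
    have hadj := shortcut_adj.1 h
    have hc : c ≠ x := by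
      rcases hadj.2 with h | h | h
      · exact h.2.2
      · exact h.2 ▸ hq.ne'
      · exact h.2 ▸ hp.ne
    obtain ⟨hx, Q, hQ, hsup⟩ := ih hc hpath.1
    have huQ : (x ∉ Q.support) → u ∉ Q.support := fun hxQ hmem => by
      rcases hsup u hmem with h1 | h1
      · exact hpath.2 h1
      · exact hu h1.1
    refine ⟨by simp [hx, hu.symm], ?_⟩
    by_cases hend : (u = p ∧ c = q) ∨ (u = q ∧ c = p)
    · -- the edge is `pq` itself, replaced by the detour through `x`; it is not used again
      have hxQ : x ∉ Q.support := by
        intro hmem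
        rcases hsup x hmem with h1 | ⟨-, h1, h2⟩
        · exact hx h1
        · rcases hend with h3 | h3
          · exact hpath.2 (h3.1 ▸ h1)
          · exact hpath.2 (h3.1 ▸ h2)
      have hux : G.Adj u x := by
        rcases hend with h3 | h3
        · exact h3.1 ▸ hp
        · exact h3.1 ▸ hq.symm
      have hxc : G.Adj x c := by
        rcases hend with h3 | h3
        · exact h3.2 ▸ hq
        · exact h3.2 ▸ hp.symm
      refine ⟨Walk.cons hux (Walk.cons hxc Q), ?_, ?_⟩
      · rw [Walk.cons_isPath_iff, Walk.cons_isPath_iff]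
        refine ⟨⟨hQ, hxQ⟩, ?_⟩
        simp [hu, huQ hxQ]
      · intro w hw
        have hcW := W'.start_mem_support
        simp only [Walk.support_cons, List.mem_cons] at hw ⊢
        rcases hw with rfl | rfl | hw
        · exact Or.inl (Or.inl rfl)
        · refine Or.inr ⟨rfl, ?_⟩
          rcases hend with h3 | h3
          · exact ⟨Or.inl h3.1.symm, Or.inr (h3.2 ▸ hcW)⟩
          · exact ⟨Or.inr (h3.2 ▸ hcW), Or.inl h3.1.symm⟩
        · rcases hsup w hw with h1 | ⟨rfl, -, -⟩
          · exact Or.inl (Or.inr h1)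
          · exact absurd hw hxQ
    · have huc : G.Adj u c := by
        rcases hadj.2 with h1 | h1
        · exact h1.1
        · exact absurd h1 hend
      refine ⟨Walk.cons huc Q, ?_, ?_⟩
      · rw [Walk.cons_isPath_iff]
        refine ⟨hQ, fun hmem => ?_⟩
        rcases hsup u hmem with h1 | h1
        · exact hpath.2 h1
        · exact hu h1.1
      · intro w hw
        simp only [Walk.support_cons, List.mem_cons] at hw ⊢
        rcases hw with rfl | hw
        · exact Or.inl (Or.inl rfl)
        · rcases hsup w hw with h1 | ⟨h1, h2, h3⟩
          · exact Or.inl (Or.inr h1)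
          · exact Or.inr ⟨h1, Or.inr h2, Or.inr h3⟩

theorem HasK5Subdivision.of_shortcut {V : Type} {G : SimpleGraph V} {x p q : V}
    (hK : HasK5Subdivision (shortcut G x p q)) (hp : G.Adj p x) (hq : G.Adj x q)
    (hpq : p ≠ q) : HasK5Subdivision G := by
  rw [hasK5Subdivision_iff] at *
  obtain ⟨b, hb, P, h1, h2, h3⟩ := hK
  -- `x` is isolated, hence not a branch vertex
  have hbx : ∀ i, b i ≠ x := by
    have key : ∀ i j, i ≠ j → (shortcut G x p q).Reachable (b i) (b j) := by
      intro i j hij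
      rcases lt_or_gt_of_ne hij with h | h
      · exact ⟨P i j h⟩
      · exact ⟨(P j i h).reverse⟩
    intro i hi
    obtain ⟨j, hij⟩ := exists_ne i
    obtain ⟨W⟩ := key i j hij.symm
    have h := W.adj_snd (Walk.not_nil_of_ne (hb.ne hij.symm))
    generalize W.snd = y at h
    rw [hi] at h
    rcases (shortcut_adj.1 h).2 with h | h | h
    · exact h.2.1 rfl
    · exact hp.ne h.1.symm
    · exact hq.ne h.1
  have hQ := fun i j h => exists_path_of_shortcut hp hq (P i j h) (hbx i) (h1 i j h)
  choose hx Q hQp hQs using hQ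
  -- the edge `pq` lies on at most one of the ten paths
  have hone : ∀ i j i' j' h h', p ∈ (P i j h).support → q ∈ (P i j h).support →
      p ∈ (P i' j' h').support → q ∈ (P i' j' h').support → (i, j) = (i', j') := by
    intro i j i' j' h h' hpi hqi hpi' hqi'
    by_contra hne
    have e1 := h3 i j i' j' h h' hne p hpi hpi'
    have e2 := h3 i j i' j' h h' hne q hqi hqi'
    have e3 := h3 i' j' i j h' h (Ne.symm hne) p hpi' hpi
    have e4 := h3 i' j' i j h' h (Ne.symm hne) q hqi' hqi
    have hi : b i = p ∨ b i = q := by grind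
    have hj : b j = p ∨ b j = q := by grind
    have hi' : b i' = p ∨ b i' = q := by grind
    have hj' : b j' = p ∨ b j' = q := by grind
    have inj : ∀ m n, b m = b n → m = n := fun m n h => hb h
    apply hne
    rw [Prod.mk.injEq]
    have hij := h.ne
    have hij' := h'.ne
    have : (i = i' ∧ j = j') ∨ (i = j' ∧ j = i') := by grind
    rcases this with h4 | h4
    · exact h4
    · exact absurd h' (by rw [← h4.1, ← h4.2]; exact h.asymm)
  refine ⟨b, hb, Q, hQp, ?_, ?_⟩
  · intro i j h k hk
    rcases hQs i j h _ hk with h4 | h4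
    · exact h2 i j h k h4
    · exact absurd h4.1 (hbx k)
  · intro i j i' j' h h' hne w hw hw'
    rcases hQs i j h _ hw with h4 | ⟨h4, h5, h6⟩
    · rcases hQs i' j' h' _ hw' with h4' | ⟨h4', -⟩
      · exact h3 i j i' j' h h' hne w h4 h4'
      · exact absurd (h4' ▸ h4) (hx i j h)
    · rcases hQs i' j' h' _ hw' with h4' | ⟨h4', h5', h6'⟩
      · exact absurd (h4 ▸ h4') (hx i' j' h')
      · exact absurd (hone i j i' j' h h' h5 h6 h5' h6') hne

/-! ### Sparse hosts of a subdivision -/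

/-- A graph with a `K5`-subdivision has a subgraph (the subdivision itself) which still contains a
`K5`-subdivision and in which no vertex has five distinct neighbours. -/
theorem HasK5Subdivision.exists_sparse {V : Type} {G : SimpleGraph V} (hK : HasK5Subdivision G) :
    ∃ H : SimpleGraph V, H ≤ G ∧ HasK5Subdivision H ∧
      ∀ (v : V) (w : Fin 5 → V), Function.Injective w → ¬ ∀ m, H.Adj v (w m) := by
  obtain ⟨b, hb, P, h1, h2, h3⟩ := (hasK5Subdivision_iff G).1 hK
  let H : SimpleGraph V :=
    { Adj := fun u v => ∃ i j h, (P i j h).toSubgraph.Adj u v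
      symm := ⟨fun u v ⟨i, j, h, hadj⟩ => ⟨i, j, h, hadj.symm⟩⟩
      loopless := ⟨fun u ⟨i, j, h, hadj⟩ => hadj.ne rfl⟩ }
  have hP : ∀ i j h, ∀ e ∈ (P i j h).edges, e ∈ H.edgeSet := by
    intro i j h e he
    induction e with
    | h u v => exact ⟨i, j, h, (Walk.adj_toSubgraph_iff_mem_edges).2 he⟩
  refine ⟨H, fun u v ⟨i, j, h, hadj⟩ => hadj.adj_sub, ?_, ?_⟩
  · rw [hasK5Subdivision_iff]
    refine ⟨b, hb, fun i j h => (P i j h).transfer H (hP i j h), ?_, ?_, ?_⟩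
    · intro i j h
      exact (h1 i j h).transfer _
    · intro i j h k
      rw [Walk.support_transfer]
      exact h2 i j h k
    · intro i j i' j' h h' hne x
      rw [Walk.support_transfer, Walk.support_transfer]
      exact h3 i j i' j' h h' hne x
  · intro v w hw hadj
    choose I J hIJ hadj using hadj
    have hv : ∀ m, v ∈ (P (I m) (J m) (hIJ m)).support := fun m =>
      (Walk.mem_verts_toSubgraph _).1 (hadj m).fst_mem
    by_cases hbr : ∃ k, v = b k
    · obtain ⟨k, rfl⟩ := hbr
      have hk : ∀ m, k = I m ∨ k = J m := fun m => h2 _ _ (hIJ m) k (hv m)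
      -- each neighbour is assigned the other end of the path it lies on
      let l : Fin 5 → Fin 5 := fun m => if k = I m then J m else I m
      have hlk : ∀ m, l m ≠ k := by
        intro m
        have := (hIJ m).ne
        have := hk m
        simp only [l]
        split_ifs <;> grind
      have hninj : ¬ Function.Injective l := by
        intro hinj
        obtain ⟨m, hm⟩ := (Finite.injective_iff_surjective.1 hinj) k
        exact hlk m hm
      rw [Function.not_injective_iff] at hninj
      obtain ⟨m, m', hl, hne⟩ := hninj
      have hsame : I m = I m' ∧ J m = J m' := by
        have a1 := hIJ m
        have a2 := hIJ m'
        have a3 := hk m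
        have a4 := hk m'
        simp only [l] at hl
        split_ifs at hl <;> grind
      have hm := hadj m
      have hm' := hadj m'
      have huniq : ∀ i j h, (k = i ∨ k = j) → ∀ x y, (P i j h).toSubgraph.Adj (b k) x →
          (P i j h).toSubgraph.Adj (b k) y → x = y := by
        intro i j h hkk x y hx hy
        have hnil : ¬ (P i j h).Nil := Walk.not_nil_of_ne (hb.ne h.ne)
        rcases hkk with rfl | rfl
        · have e := (h1 k j h).neighborSet_toSubgraph_startpoint hnil
          have ex : x ∈ (P k j h).toSubgraph.neighborSet (b k) := hx
          have ey : y ∈ (P k j h).toSubgraph.neighborSet (b k) := hy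
          rw [e] at ex ey
          exact ex.trans ey.symm
        · have e := (h1 i k h).neighborSet_toSubgraph_endpoint hnil
          have ex : x ∈ (P i k h).toSubgraph.neighborSet (b k) := hx
          have ey : y ∈ (P i k h).toSubgraph.neighborSet (b k) := hy
          rw [e] at ex ey
          exact ex.trans ey.symm
      have hm'' : ∀ i j h, I m' = i → J m' = j → (P i j h).toSubgraph.Adj (b k) (w m') := by
        rintro i j h rfl rfl
        exact hm'
      exact hne (hw (huniq _ _ (hIJ m) (hk m) _ _ hm
        (hm'' _ _ (hIJ m) hsame.1.symm hsame.2.symm)))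
    · push Not at hbr
      have hsame : ∀ m, (I m, J m) = (I 0, J 0) := by
        intro m
        by_contra hne
        rcases h3 _ _ _ _ (hIJ m) (hIJ 0) hne v (hv m) (hv 0) with h | h
        · exact hbr _ h
        · exact hbr _ h
      have hall : ∀ m, w m ∈ (P (I 0) (J 0) (hIJ 0)).toSubgraph.neighborSet v := by
        intro m
        have key : ∀ i j h, (I m, J m) = (i, j) → (P i j h).toSubgraph.Adj v (w m) := by
          intro i j h hij
          rw [Prod.mk.injEq] at hij
          obtain ⟨rfl, rfl⟩ := hij
          exact hadj m
        exact key _ _ _ (hsame m)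
      obtain ⟨n, hn, hlen⟩ := Walk.mem_support_iff_exists_getVert.1 (hv 0)
      have hn0 : n ≠ 0 := by
        rintro rfl
        rw [Walk.getVert_zero] at hn
        exact hbr _ hn.symm
      have hnl : n < (P (I 0) (J 0) (hIJ 0)).length := by
        refine lt_of_le_of_ne hlen ?_
        intro h
        rw [h, Walk.getVert_length] at hn
        exact hbr _ hn.symm
      have e := (h1 _ _ (hIJ 0)).neighborSet_toSubgraph_internal hn0 hnl
      rw [hn] at e
      rw [e] at hall
      have w0 := hall 0
      have w1 := hall 1
      have w2 := hall 2
      have n01 : w 0 ≠ w 1 := hw.ne (by decide)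
      have n02 : w 0 ≠ w 2 := hw.ne (by decide)
      have n12 : w 1 ≠ w 2 := hw.ne (by decide)
      simp only [Set.mem_insert_iff, Set.mem_singleton_iff] at w0 w1 w2
      grind

/-! ### Minimality and reductions -/

/-- Minimality of a Hajós graph: a graph on the same vertex set without `K5`-subdivision can be
4-coloured away from any prescribed vertex. -/
theorem IsHajos.exists_coloring {V : Type} [Fintype V] {G : SimpleGraph V} (hG : IsHajos G)
    (G' : SimpleGraph V) (hG' : ¬ HasK5Subdivision G') (x : V) :
    ∃ f : V → Fin 4, ∀ u v, u ≠ x → v ≠ x → G'.Adj u v → f u ≠ f v := by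
  classical
  let W := {v : V // v ≠ x}
  have hcard : Fintype.card W < Fintype.card V := Fintype.card_subtype_lt (x := x) (by simp)
  let e := Fintype.equivFin W
  let H : SimpleGraph (Fin (Fintype.card W)) := G'.comap (fun i => ((e.symm i : W) : V))
  rcases hG.2.2 _ hcard H with h | h
  · refine absurd (h.map ⟨fun i => ((e.symm i : W) : V), fun {a b} h => h⟩ ?_) hG'
    exact Subtype.val_injective.comp e.symm.injective
  · obtain ⟨C⟩ := h
    refine ⟨fun v => if h : v ≠ x then C (e ⟨v, h⟩) else 0, ?_⟩
    intro u v hu hv huv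
    simp only [hu, hv, ne_eq, not_false_eq_true, dif_pos]
    apply C.valid
    simpa [H] using huv

theorem colorable_of_fun {V : Type} {G : SimpleGraph V} (f : V → Fin 4)
    (hf : ∀ u v, G.Adj u v → f u ≠ f v) : G.Colorable 4 :=
  ⟨Coloring.mk f fun {u v} h => hf u v h⟩

/-- A vertex with at most three neighbours does not occur in a Hajós graph. -/
theorem IsHajos.no_degree_three {V : Type} [Fintype V] {G : SimpleGraph V} (hG : IsHajos G)
    (x n1 n2 n3 : V) (hN : ∀ w, G.Adj x w → w = n1 ∨ w = n2 ∨ w = n3) : False := by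
  classical
  obtain ⟨f, hf⟩ := hG.exists_coloring G hG.1 x
  have hcol : ∀ p q r : Fin 4, ∃ c, c ≠ p ∧ c ≠ q ∧ c ≠ r := by decide
  obtain ⟨c, h1, h2, h3⟩ := hcol (f n1) (f n2) (f n3)
  have hx : ∀ w, G.Adj x w → c ≠ f w := by
    intro w hw
    rcases hN w hw with rfl | rfl | rfl <;> assumption
  refine hG.2.1 (colorable_of_fun (Function.update f x c) ?_)
  intro u v huv
  by_cases hu : u = x
  · subst hu
    rw [Function.update_self, Function.update_of_ne huv.ne']
    exact hx v huv
  · by_cases hv : v = x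
    · subst hv
      rw [Function.update_self, Function.update_of_ne hu]
      exact (hx u huv.symm).symm
    · rw [Function.update_of_ne hu, Function.update_of_ne hv]
      exact hf u v hu hv huv

/-- Adjacent vertices `x`, `y` whose further neighbours are among `z`, `r`, `p` and among `z`, `r`, `q`
do not occur in a Hajós graph: delete `x` and `y` and join their private neighbours `p` and `q`.  The path
`p x y q` shows that no `K5`-subdivision arises, and a colouring with `p` and `q` coloured
differently leaves distinct colours for `x` and `y`. -/
theorem IsHajos.no_degree_four_edge {V : Type} [Fintype V] {G : SimpleGraph V} (hG : IsHajos G)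
    (x y z r p q : V) (hxy : G.Adj x y) (hxp : G.Adj x p) (hyq : G.Adj y q) (hpq : p ≠ q)
    (hpy : p ≠ y) (hqx : q ≠ x)
    (hNx : ∀ w, G.Adj x w → w = y ∨ w = z ∨ w = r ∨ w = p)
    (hNy : ∀ w, G.Adj y w → w = x ∨ w = z ∨ w = r ∨ w = q) : False := by
  classical
  have hK : ¬ HasK5Subdivision (shortcut (shortcut G x p y) y p q) := by
    intro h
    have h1 : HasK5Subdivision (shortcut G x p y) := by
      refine h.of_shortcut ?_ ?_ hpq
      · exact shortcut_adj.2 ⟨hpy, Or.inr (Or.inl ⟨rfl, rfl⟩)⟩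
      · exact shortcut_adj.2 ⟨hyq.ne, Or.inl ⟨hyq, hxy.ne', hqx⟩⟩
    exact hG.1 (h1.of_shortcut hxp.symm hxy hpy)
  obtain ⟨f, hf⟩ := hG.exists_coloring _ hK x
  have hpqf : f p ≠ f q := hf p q hxp.ne' hqx
    (shortcut_adj.2 ⟨hpq, Or.inr (Or.inl ⟨rfl, rfl⟩)⟩)
  have hcol : ∀ c1 c2 c3 c4 : Fin 4, c3 ≠ c4 → ∃ cx cy : Fin 4, cx ≠ cy ∧ cx ≠ c1 ∧ cx ≠ c2 ∧
      cx ≠ c3 ∧ cy ≠ c1 ∧ cy ≠ c2 ∧ cy ≠ c4 := by decide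
  obtain ⟨cx, cy, hc, hx1, hx2, hx3, hy1, hy2, hy3⟩ := hcol (f z) (f r) (f p) (f q) hpqf
  have hfx : ∀ w, w ≠ y → G.Adj x w → cx ≠ f w := by
    intro w hwy hw
    rcases hNx w hw with rfl | rfl | rfl | rfl
    · exact absurd rfl hwy
    all_goals assumption
  have hfy : ∀ w, w ≠ x → G.Adj y w → cy ≠ f w := by
    intro w hwx hw
    rcases hNy w hw with rfl | rfl | rfl | rfl
    · exact absurd rfl hwx
    all_goals assumption
  have hfr : ∀ u v, u ≠ x → u ≠ y → v ≠ x → v ≠ y → G.Adj u v → f u ≠ f v := by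
    intro u v hux huy hvx hvy huv
    refine hf u v hux hvx ?_
    rw [shortcut_adj, shortcut_adj]
    exact ⟨huv.ne, Or.inl ⟨⟨huv.ne, Or.inl ⟨huv, hux, hvx⟩⟩, huy, hvy⟩⟩
  refine hG.2.1 (colorable_of_fun (fun w => if w = x then cx else if w = y then cy else f w) ?_)
  intro u v huv
  have hyx := hxy.ne'
  by_cases hux : u = x <;> by_cases huy : u = y <;> by_cases hvx : v = x <;>
    by_cases hvy : v = y <;> simp only [*, if_true, if_false] <;>
    grind [SimpleGraph.Adj.symm, SimpleGraph.Adj.ne]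

/-! ### Replacing a triangle by a star -/

/-- Delete `x`, `y`, `z` (keeping them as isolated vertices) and join `t` to every vertex of `X`
outside `{x, y, z}`. -/
def starReplace {V : Type} (G : SimpleGraph V) (x y z t : V) (X : Set V) : SimpleGraph V where
  Adj u v := u ≠ v ∧ (u ≠ x ∧ u ≠ y ∧ u ≠ z) ∧ (v ≠ x ∧ v ≠ y ∧ v ≠ z) ∧
    (G.Adj u v ∨ (u = t ∧ v ∈ X) ∨ (v = t ∧ u ∈ X))
  symm := ⟨fun u v h => ⟨h.1.symm, h.2.2.1, h.2.1, by
    rcases h.2.2.2 with h | h | h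
    · exact Or.inl h.symm
    · exact Or.inr (Or.inr h)
    · exact Or.inr (Or.inl h)⟩⟩
  loopless := ⟨fun u h => h.1 rfl⟩

theorem starReplace_adj {V : Type} {G : SimpleGraph V} {x y z t u v : V} {X : Set V} :
    (starReplace G x y z t X).Adj u v ↔ u ≠ v ∧ (u ≠ x ∧ u ≠ y ∧ u ≠ z) ∧
      (v ≠ x ∧ v ≠ y ∧ v ≠ z) ∧ (G.Adj u v ∨ (u = t ∧ v ∈ X) ∨ (v = t ∧ u ∈ X)) := Iff.rfl

/-- Two new edges `tu` and `tv` can be realised by the disjoint paths `t y u` and `t z x v`. -/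
theorem HasK5Subdivision.of_two_edges {V : Type} {G H : SimpleGraph V} {x y z t u v : V}
    (hK : HasK5Subdivision H) (hxy : x ≠ y) (hyz : y ≠ z)
    (hty : G.Adj t y) (hyu : G.Adj y u) (htz : G.Adj t z) (hzx : G.Adj z x) (hxv : G.Adj x v)
    (htx : t ≠ x) (htu : t ≠ u) (htv : t ≠ v) (hvy : v ≠ y) (hvz : v ≠ z)
    (hH : H ≤ starReplace G x y z t {u, v}) : HasK5Subdivision G := by
  have h1 : HasK5Subdivision (shortcut (shortcut (shortcut G y t u) z t x) x t v) := by
    refine hK.mono (hH.trans ?_)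
    intro a b hab
    rw [starReplace_adj] at hab
    simp only [shortcut_adj]
    simp only [Set.mem_insert_iff, Set.mem_singleton_iff] at hab
    grind
  have h2 : HasK5Subdivision (shortcut (shortcut G y t u) z t x) := by
    refine h1.of_shortcut ?_ ?_ htv
    · exact shortcut_adj.2 ⟨htx, Or.inr (Or.inl ⟨rfl, rfl⟩)⟩
    · simp only [shortcut_adj]
      exact ⟨hxv.ne, Or.inl ⟨⟨hxv.ne, Or.inl ⟨hxv, hxy, hvy⟩⟩, hzx.ne', hvz⟩⟩
  have h3 : HasK5Subdivision (shortcut G y t u) := by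
    refine h2.of_shortcut ?_ ?_ htx
    · simp only [shortcut_adj]
      exact ⟨htz.ne, Or.inl ⟨htz, hty.ne, hyz.symm⟩⟩
    · simp only [shortcut_adj]
      exact ⟨hzx.ne, Or.inl ⟨hzx, hyz.symm, hxy⟩⟩
  exact h3.of_shortcut hty hyu htu

/-- If a sparse subdivision uses three new edges `ts₀`, `ts₁`, `ts₂`, then `t` has at most one further
neighbour in it, and the role of `t` is taken over by `x`, which reaches that neighbour along
`x y t`. -/
theorem HasK5Subdivision.of_three_edges {V : Type} {G H : SimpleGraph V} {x y z t s0 s1 s2 : V}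
    (hK : HasK5Subdivision H)
    (hsparse : ∀ (v : V) (w : Fin 5 → V), Function.Injective w → ¬ ∀ m, H.Adj v (w m))
    (hxy : G.Adj x y) (hty : G.Adj t y) (htx : t ≠ x)
    (hx0 : G.Adj x s0) (hx1 : G.Adj x s1) (hx2 : G.Adj x s2)
    (h01 : s0 ≠ s1) (h02 : s0 ≠ s2) (h12 : s1 ≠ s2)
    (ht0 : H.Adj t s0) (ht1 : H.Adj t s1) (ht2 : H.Adj t s2)
    (hH : H ≤ starReplace G x y z t {s0, s1, s2}) : HasK5Subdivision G := by
  classical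
  have hHx : ∀ v, ¬ H.Adj x v := fun v h => (hH h).2.1.1 rfl
  have hHy : ∀ v, ¬ H.Adj y v := fun v h => (hH h).2.1.2.1 rfl
  have huniq : ∀ w w', H.Adj t w → H.Adj t w' → w ≠ s0 → w ≠ s1 → w ≠ s2 → w' ≠ s0 → w' ≠ s1 →
      w' ≠ s2 → w = w' := by
    intro w w' hw hw' a0 a1 a2 b0 b1 b2
    by_contra hne
    refine hsparse t ![s0, s1, s2, w, w'] ?_ ?_
    · intro i j hij
      fin_cases i <;> fin_cases j <;> simp_all
    · intro m
      fin_cases m <;> simpa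
  -- exchange the isolated vertex `x` with `t`
  let H' : SimpleGraph V := H.comap (Equiv.swap t x)
  have hK' : HasK5Subdivision H' := by
    refine hK.map ⟨Equiv.swap t x, fun {a b} h => ?_⟩ (Equiv.swap t x).injective
    simpa [H'] using h
  have hswap : ∀ u v, H'.Adj u v → (u = x ∧ v ≠ x ∧ v ≠ t ∧ v ≠ y ∧ H.Adj t v) ∨
      (v = x ∧ u ≠ x ∧ u ≠ t ∧ u ≠ y ∧ H.Adj t u) ∨
      (u ≠ x ∧ u ≠ t ∧ u ≠ y ∧ v ≠ x ∧ v ≠ t ∧ v ≠ y ∧ H.Adj u v) := by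
    intro u v h
    have h' : H.Adj (Equiv.swap t x u) (Equiv.swap t x v) := h
    rw [Equiv.swap_apply_def, Equiv.swap_apply_def] at h'
    have hs := h'.symm
    have hne := h'.ne
    have := hHx
    have := hHy
    split_ifs at h' hs hne <;> grind
  have hHG : ∀ u v, H.Adj u v → u ≠ t → v ≠ t → G.Adj u v := by
    intro u v h hu hv
    rcases (hH h).2.2.2 with h1 | h1 | h1
    · exact h1
    · exact absurd h1.1 hu
    · exact absurd h1.1 hv
  have hHt : ∀ v, H.Adj t v → v ≠ s0 → v ≠ s1 → v ≠ s2 → G.Adj t v := by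
    intro v h a0 a1 a2
    rcases (hH h).2.2.2 with h1 | h1 | h1
    · exact h1
    · simp_all
    · exact absurd h1.1 h.ne'
  by_cases hw : ∃ w, H.Adj t w ∧ w ≠ s0 ∧ w ≠ s1 ∧ w ≠ s2
  · obtain ⟨w, hw, w0, w1, w2⟩ := hw
    have hwx : w ≠ x := (hH hw).2.2.1.1
    have hwy : w ≠ y := (hH hw).2.2.1.2.1
    have hGtw := hHt w hw w0 w1 w2
    have h1 : HasK5Subdivision (shortcut (shortcut G y x t) t x w) := by
      refine hK'.mono ?_
      intro u v huv
      have hne := huv.ne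
      simp only [shortcut_adj]
      refine ⟨hne, ?_⟩
      rcases hswap u v huv with ⟨rfl, h1, h2, h3, h4⟩ | ⟨rfl, h1, h2, h3, h4⟩ |
        ⟨h1, h2, h3, h4, h5, h6, h7⟩
      · by_cases hv : v = s0 ∨ v = s1 ∨ v = s2
        · have : G.Adj u v := by rcases hv with rfl | rfl | rfl <;> assumption
          exact Or.inl ⟨⟨hne, Or.inl ⟨this, hxy.ne, h3⟩⟩, htx.symm, h2⟩
        · push Not at hv
          exact Or.inr (Or.inl ⟨rfl, huniq v w h4 hw hv.1 hv.2.1 hv.2.2 w0 w1 w2⟩)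
      · by_cases hv : u = s0 ∨ u = s1 ∨ u = s2
        · have : G.Adj v u := by rcases hv with rfl | rfl | rfl <;> assumption
          exact Or.inl ⟨⟨hne, Or.inl ⟨this.symm, h3, hxy.ne⟩⟩, h2, htx.symm⟩
        · push Not at hv
          exact Or.inr (Or.inr ⟨huniq u w h4 hw hv.1 hv.2.1 hv.2.2 w0 w1 w2, rfl⟩)
      · exact Or.inl ⟨⟨hne, Or.inl ⟨hHG u v h7 h2 h5, h3, h6⟩⟩, h2, h5⟩
    have h2 : HasK5Subdivision (shortcut G y x t) := by
      refine h1.of_shortcut ?_ ?_ hwx.symm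
      · exact shortcut_adj.2 ⟨htx.symm, Or.inr (Or.inl ⟨rfl, rfl⟩)⟩
      · exact shortcut_adj.2 ⟨hw.ne, Or.inl ⟨hGtw, hty.ne, hwy⟩⟩
    exact h2.of_shortcut hxy hty.symm htx.symm
  · push Not at hw
    have hx : ∀ v, H.Adj t v → G.Adj x v := by
      intro v hv
      by_cases v0 : v = s0
      · exact v0 ▸ hx0
      by_cases v1 : v = s1
      · exact v1 ▸ hx1
      exact (hw v hv v0 v1) ▸ hx2
    refine hK'.mono ?_
    intro u v huv
    rcases hswap u v huv with ⟨rfl, h1, h2, h3, h4⟩ | ⟨rfl, h1, h2, h3, h4⟩ |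
        ⟨h1, h2, h3, h4, h5, h6, h7⟩
    · exact hx v h4
    · exact (hx u h4).symm
    · exact hHG u v h7 h2 h5

/-- A reducible triangle `xyz`: `t` is a common neighbour of `y` and `z`, not adjacent to `x`, and
outside the triangle `x`, `y`, `z` have at most three, three and two neighbours.  The triangle is
deleted and `t` is joined to the outer neighbours `s₀`, `s₁`, `s₂` of `x`; in a colouring of the
result `x` may receive the colour of `t`, after which `y` and `z` are coloured greedily.  The case
`s₁ = s₀` covers the situation in which `x` has only two outer neighbours. -/
theorem IsHajos.no_star_triangle {V : Type} [Fintype V] {G : SimpleGraph V} (hG : IsHajos G)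
    (x y z t s0 s1 s2 y1 y2 z1 : V)
    (hxy : G.Adj x y) (hyz : G.Adj y z) (hxz : G.Adj x z)
    (htx : t ≠ x) (hty : G.Adj t y) (htz : G.Adj t z)
    (hx0 : G.Adj x s0) (hx1 : G.Adj x s1) (hx2 : G.Adj x s2)
    (hy0 : G.Adj y s0) (hz1 : s1 = s0 ∨ G.Adj z s1)
    (ht0 : t ≠ s0) (ht1 : t ≠ s1) (ht2 : t ≠ s2)
    (h0z : s0 ≠ z) (h1y : s1 ≠ y) (h1z : s1 ≠ z) (h2y : s2 ≠ y) (h2z : s2 ≠ z)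
    (hNx : ∀ w, G.Adj x w → w = y ∨ w = z ∨ w = s0 ∨ w = s1 ∨ w = s2)
    (hNy : ∀ w, G.Adj y w → w = x ∨ w = z ∨ w = t ∨ w = y1 ∨ w = y2)
    (hNz : ∀ w, G.Adj z w → w = x ∨ w = y ∨ w = t ∨ w = z1) : False := by
  classical
  have hK : ¬ HasK5Subdivision (starReplace G x y z t {s0, s1, s2}) := by
    intro h
    obtain ⟨H, hH, hKH, hsparse⟩ := h.exists_sparse
    -- a host using only two of the three new edges
    have hle : ∀ u v, (∀ s, H.Adj t s → s ∈ ({s0, s1, s2} : Set V) → s = u ∨ s = v) →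
        H ≤ starReplace G x y z t {u, v} := by
      intro u v hs a b hab
      obtain ⟨h1, h2, h3, h4⟩ := hH hab
      refine ⟨h1, h2, h3, ?_⟩
      rcases h4 with h4 | ⟨rfl, h4⟩ | ⟨rfl, h4⟩
      · exact Or.inl h4
      · exact Or.inr (Or.inl ⟨rfl, hs b hab h4⟩)
      · exact Or.inr (Or.inr ⟨rfl, hs a hab.symm h4⟩)
    have hA := fun hs => hKH.of_two_edges hxy.ne hyz.ne hty hy0 htz hxz.symm hx2 htx ht0 ht2 h2y h2z
      (hle s0 s2 hs)
    have hB := fun hs => hKH.of_two_edges hxy.ne hyz.ne hty hy0 htz hxz.symm hx1 htx ht0 ht1 h1y h1z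
      (hle s0 s1 hs)
    have hle' : ∀ u v, starReplace G x y z t {u, v} ≤ starReplace G x z y t {u, v} := by
      intro u v a b hab
      rw [starReplace_adj] at *
      tauto
    have hC := fun hzs hs => hKH.of_two_edges hxz.ne hyz.ne' htz hzs hty hxy.symm hx2 htx ht1 ht2
      h2z h2y ((hle s1 s2 hs).trans (hle' _ _))
    apply hG.1
    by_cases e01 : s1 = s0
    · refine hA fun s _ hs => ?_
      simp only [Set.mem_insert_iff, Set.mem_singleton_iff] at hs
      grind
    have hzs := hz1.resolve_left e01
    by_cases e02 : s2 = s0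
    · refine hB fun s _ hs => ?_
      simp only [Set.mem_insert_iff, Set.mem_singleton_iff] at hs
      grind
    by_cases e12 : s2 = s1
    · refine hB fun s _ hs => ?_
      simp only [Set.mem_insert_iff, Set.mem_singleton_iff] at hs
      grind
    by_cases a0 : H.Adj t s0
    · by_cases a1 : H.Adj t s1
      · by_cases a2 : H.Adj t s2
        · exact hKH.of_three_edges hsparse hxy hty htx hx0 hx1 hx2 (Ne.symm e01) (Ne.symm e02)
            (Ne.symm e12) a0 a1 a2 hH
        · refine hB fun s hts hs => ?_
          simp only [Set.mem_insert_iff, Set.mem_singleton_iff] at hs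
          grind
      · refine hA fun s hts hs => ?_
        simp only [Set.mem_insert_iff, Set.mem_singleton_iff] at hs
        grind
    · refine hC hzs fun s hts hs => ?_
      simp only [Set.mem_insert_iff, Set.mem_singleton_iff] at hs
      grind
  obtain ⟨f, hf⟩ := hG.exists_coloring _ hK x
  have hcol : ∀ c1 c2 c3 c4 : Fin 4, ∃ cy cz : Fin 4, cy ≠ cz ∧ cy ≠ c1 ∧ cy ≠ c2 ∧ cy ≠ c3 ∧
      cz ≠ c1 ∧ cz ≠ c4 := by decide
  obtain ⟨cy, cz, hc, hcy1, hcy2, hcy3, hcz1, hcz2⟩ := hcol (f t) (f y1) (f y2) (f z1)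
  have hft : ∀ s, s ∈ ({s0, s1, s2} : Set V) → s ≠ x → s ≠ y → s ≠ z → s ≠ t → f t ≠ f s := by
    intro s hs h1 h2 h3 h4
    exact hf t s htx h1 ⟨h4.symm, ⟨htx, hty.ne, htz.ne⟩, ⟨h1, h2, h3⟩, Or.inr (Or.inl ⟨rfl, hs⟩)⟩
  have hfx : ∀ w, w ≠ y → w ≠ z → G.Adj x w → f t ≠ f w := by
    intro w hwy hwz hw
    have hwx := hw.ne'
    have : w = s0 ∨ w = s1 ∨ w = s2 := by
      rcases hNx w hw with h | h | h
      · exact absurd h hwy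
      · exact absurd h hwz
      · exact h
    refine hft w this hwx hwy hwz ?_
    rcases this with rfl | rfl | rfl <;> exact Ne.symm (by assumption)
  have hfy : ∀ w, w ≠ x → w ≠ z → G.Adj y w → cy ≠ f w := by
    intro w hwx hwz hw
    rcases hNy w hw with rfl | rfl | rfl | rfl | rfl
    · exact absurd rfl hwx
    · exact absurd rfl hwz
    all_goals assumption
  have hfz : ∀ w, w ≠ x → w ≠ y → G.Adj z w → cz ≠ f w := by
    intro w hwx hwy hw
    rcases hNz w hw with rfl | rfl | rfl | rfl
    · exact absurd rfl hwx
    · exact absurd rfl hwy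
    all_goals assumption
  have hfr : ∀ u v, u ≠ x → u ≠ y → u ≠ z → v ≠ x → v ≠ y → v ≠ z → G.Adj u v → f u ≠ f v := by
    intro u v hux huy huz hvx hvy hvz huv
    exact hf u v hux hvx ⟨huv.ne, ⟨hux, huy, huz⟩, ⟨hvx, hvy, hvz⟩, Or.inl huv⟩
  have e1 := hxy.ne
  have e2 := hyz.ne
  have e3 := hxz.ne
  refine hG.2.1 (colorable_of_fun
    (fun w => if w = x then f t else if w = y then cy else if w = z then cz else f w) ?_)
  intro u v huv
  have hvu := huv.symm
  have hne := huv.ne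
  by_cases hux : u = x
  · subst hux
    grind
  by_cases huy : u = y
  · subst huy
    grind
  by_cases huz : u = z
  · subst huz
    grind
  have := hfx u
  have := hfy u
  have := hfz u
  have := hfr u v
  simp only [hux, huy, huz, if_false]
  grind

/-! ### Non-planar configurations -/

/-- A `K3,3` with sides `{a, b, z}` and `{s, t, c}` in which the edge `zc` is subdivided by `u`. -/
theorem hasK33Subdivision_of_subdivided_edge {W : Type} {Γ : SimpleGraph W} {a b c z s t u : W}
    (hab : a ≠ b) (haz : a ≠ z) (hbz : b ≠ z) (hcz : c ≠ z) (hst : s ≠ t) (hsc : s ≠ c)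
    (htc : t ≠ c) (hua : u ≠ a) (hub : u ≠ b) (hus : u ≠ s) (hut : u ≠ t)
    (has : Γ.Adj a s) (hat : Γ.Adj a t) (hac : Γ.Adj a c)
    (hbs : Γ.Adj b s) (hbt : Γ.Adj b t) (hbc : Γ.Adj b c)
    (hzs : Γ.Adj z s) (hzt : Γ.Adj z t) (hzu : Γ.Adj z u) (huc : Γ.Adj u c) :
    HasK33Subdivision Γ := by
  have hdirect : ∀ (p q : W) (R : Prop), Γ.Adj p q → ∃ P : Γ.Walk p q, P.IsPath ∧
      ∀ x ∈ P.support, x = p ∨ x = q ∨ (x = u ∧ R) := by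
    intro p q R h
    refine ⟨h.toWalk, by simp [h.ne], ?_⟩
    intro x hx
    have : x = p ∨ x = q := by simpa using hx
    tauto
  have key : ∀ i j : Fin 3, ∃ P : Γ.Walk ((![a, b, z] : Fin 3 → W) i) ((![s, t, c] : Fin 3 → W) j),
      P.IsPath ∧ ∀ x ∈ P.support, x = (![a, b, z] : Fin 3 → W) i ∨ x = (![s, t, c] : Fin 3 → W) j ∨
        (x = u ∧ i = 2 ∧ j = 2) := by
    intro i j
    by_cases hij : i = 2 ∧ j = 2
    · obtain ⟨rfl, rfl⟩ := hij
      refine ⟨(Walk.cons hzu (Walk.cons huc Walk.nil) : Γ.Walk z c), ?_, ?_⟩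
      · simp [huc.ne, hzu.ne, hcz.symm]
      · intro x hx
        have : x = z ∨ x = u ∨ x = c := by simpa using hx
        have e1 : (![a, b, z] : Fin 3 → W) 2 = z := rfl
        have e2 : (![s, t, c] : Fin 3 → W) 2 = c := rfl
        rw [e1, e2]
        tauto
    · apply hdirect
      fin_cases i <;> fin_cases j <;> first | exact absurd ⟨rfl, rfl⟩ hij | assumption
  choose P hP hsup using key
  have hA : Function.Injective (![a, b, z] : Fin 3 → W) := by
    intro i j hij
    fin_cases i <;> fin_cases j <;> simp_all
  have hB : Function.Injective (![s, t, c] : Fin 3 → W) := by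
    intro i j hij
    fin_cases i <;> fin_cases j <;> simp_all
  have hAB : ∀ i j, (![a, b, z] : Fin 3 → W) i ≠ (![s, t, c] : Fin 3 → W) j := by
    have := has.ne
    have := hat.ne
    have := hac.ne
    have := hbs.ne
    have := hbt.ne
    have := hbc.ne
    have := hzs.ne
    have := hzt.ne
    have := hcz.symm
    intro i j
    fin_cases i <;> fin_cases j <;> assumption
  have huA : ∀ i, (![a, b, z] : Fin 3 → W) i ≠ u := by
    have := hua.symm
    have := hub.symm
    have := hzu.ne
    intro i
    fin_cases i <;> assumption
  have huB : ∀ i, (![s, t, c] : Fin 3 → W) i ≠ u := by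
    have := hus.symm
    have := hut.symm
    have := huc.ne'
    intro i
    fin_cases i <;> assumption
  have hint : ∀ i j x, x ∈ walkInterior (P i j) → x = u ∧ i = 2 ∧ j = 2 := by
    intro i j x hx
    rw [mem_walkInterior_iff (hP i j) (hAB i j)] at hx
    exact ((hsup i j x hx.1).resolve_left hx.2.1).resolve_left hx.2.2
  refine ⟨_, _, hA, hB, hAB, P, hP, ?_, ?_⟩
  · intro i j k
    exact ⟨fun h => huA k (hint i j _ h).1, fun h => huB k (hint i j _ h).1⟩
  · intro i j i' j' hne x hx hx'
    obtain ⟨rfl, rfl, rfl⟩ := hint i j x hx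
    rcases hsup i' j' x hx' with h | h | ⟨-, rfl, rfl⟩
    · exact huA i' h.symm
    · exact huB j' h.symm
    · exact hne rfl

/-- Three mutually adjacent vertices joined to `s` and `t`, together with the path `s z t`. -/
theorem hasK5Subdivision_of_two_common {W : Type} {Γ : SimpleGraph W} {a b c z s t : W}
    (haz : a ≠ z) (hbz : b ≠ z) (hcz : c ≠ z) (hst : s ≠ t)
    (hab : Γ.Adj a b) (hac : Γ.Adj a c) (hbc : Γ.Adj b c)
    (has : Γ.Adj a s) (hat : Γ.Adj a t) (hbs : Γ.Adj b s) (hbt : Γ.Adj b t)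
    (hcs : Γ.Adj c s) (hct : Γ.Adj c t) (hzs : Γ.Adj z s) (hzt : Γ.Adj z t) :
    HasK5Subdivision Γ := by
  refine HasK5Subdivision.of_shortcut (x := z) (p := s) (q := t) ?_ hzs.symm hzt hst
  refine hasK5Subdivision_of_clique ![a, b, c, s, t] ?_
  have hdir : ∀ p q, Γ.Adj p q → p ≠ z → q ≠ z → (shortcut Γ z s t).Adj p q :=
    fun p q h hp hq => shortcut_adj.2 ⟨h.ne, Or.inl ⟨h, hp, hq⟩⟩
  have hsz := hzs.ne'
  have htz := hzt.ne'
  have e0 := hdir a b hab haz hbz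
  have e1 := hdir a c hac haz hcz
  have e2 := hdir b c hbc hbz hcz
  have e3 := hdir a s has haz hsz
  have e4 := hdir a t hat haz htz
  have e5 := hdir b s hbs hbz hsz
  have e6 := hdir b t hbt hbz htz
  have e7 := hdir c s hcs hcz hsz
  have e8 := hdir c t hct hcz htz
  have e9 : (shortcut Γ z s t).Adj s t := shortcut_adj.2 ⟨hst, Or.inr (Or.inl ⟨rfl, rfl⟩)⟩
  intro i j hij
  fin_cases i <;> fin_cases j <;> first | exact absurd hij (by decide) | assumption

/-- Four mutually adjacent vertices `a`, `b`, `c`, `s` and a fifth vertex `z` adjacent to `s` and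
linked to `a`, `b`, `c` by disjoint paths of length two. -/
theorem hasK5Subdivision_of_triple_common {W : Type} {Γ : SimpleGraph W} {a b c z s a' b' c' : W}
    (haz : a ≠ z) (hbz : b ≠ z) (hcz : c ≠ z)
    (hab : Γ.Adj a b) (hac : Γ.Adj a c) (hbc : Γ.Adj b c)
    (has : Γ.Adj a s) (hbs : Γ.Adj b s) (hcs : Γ.Adj c s) (hzs : Γ.Adj z s)
    (haa : Γ.Adj a a') (hbb : Γ.Adj b b') (hcc : Γ.Adj c c')
    (hza : Γ.Adj z a') (hzb : Γ.Adj z b') (hzc : Γ.Adj z c')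
    (hab' : a' ≠ b') (hac' : a' ≠ c') (hbc' : b' ≠ c')
    (has' : a' ≠ s) (hbs' : b' ≠ s) (hcs' : c' ≠ s)
    (ha'b : a' ≠ b) (ha'c : a' ≠ c) (hb'a : b' ≠ a) (hb'c : b' ≠ c)
    (hc'a : c' ≠ a) (hc'b : c' ≠ b) : HasK5Subdivision Γ := by
  have na := haa.ne
  have nb := hbb.ne
  have nc := hcc.ne
  have nza := hza.ne
  have nzb := hzb.ne
  have nzc := hzc.ne
  have nzs := hzs.ne
  have h3 : HasK5Subdivision (shortcut (shortcut (shortcut Γ a' a z) b' b z) c' c z) := by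
    refine hasK5Subdivision_of_clique ![a, b, c, s, z] ?_
    have hdir : ∀ p q, Γ.Adj p q → p ≠ a' → q ≠ a' → p ≠ b' → q ≠ b' → p ≠ c' → q ≠ c' →
        (shortcut (shortcut (shortcut Γ a' a z) b' b z) c' c z).Adj p q := by
      intro p q h h1 h2 h3 h4 h5 h6
      exact shortcut_adj.2 ⟨h.ne, Or.inl ⟨shortcut_adj.2 ⟨h.ne, Or.inl ⟨shortcut_adj.2
        ⟨h.ne, Or.inl ⟨h, h1, h2⟩⟩, h3, h4⟩⟩, h5, h6⟩⟩
    have e0 := hdir a b hab na ha'b.symm hb'a.symm nb hc'a.symm hc'b.symm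
    have e1 := hdir a c hac na ha'c.symm hb'a.symm hb'c.symm hc'a.symm nc
    have e2 := hdir b c hbc ha'b.symm ha'c.symm nb hb'c.symm hc'b.symm nc
    have e3 := hdir a s has na has'.symm hb'a.symm hbs'.symm hc'a.symm hcs'.symm
    have e4 := hdir b s hbs ha'b.symm has'.symm nb hbs'.symm hc'b.symm hcs'.symm
    have e5 := hdir c s hcs ha'c.symm has'.symm hb'c.symm hbs'.symm nc hcs'.symm
    have e6 := (hdir z s hzs nza has'.symm nzb hbs'.symm nzc hcs'.symm).symm
    have e7 : (shortcut (shortcut (shortcut Γ a' a z) b' b z) c' c z).Adj c z :=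
      shortcut_adj.2 ⟨hcz, Or.inr (Or.inl ⟨rfl, rfl⟩)⟩
    have e8 : (shortcut (shortcut (shortcut Γ a' a z) b' b z) c' c z).Adj b z :=
      shortcut_adj.2 ⟨hbz, Or.inl ⟨shortcut_adj.2 ⟨hbz, Or.inr (Or.inl ⟨rfl, rfl⟩)⟩,
        hc'b.symm, nzc⟩⟩
    have e9 : (shortcut (shortcut (shortcut Γ a' a z) b' b z) c' c z).Adj a z :=
      shortcut_adj.2 ⟨haz, Or.inl ⟨shortcut_adj.2 ⟨haz, Or.inl ⟨shortcut_adj.2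
        ⟨haz, Or.inr (Or.inl ⟨rfl, rfl⟩)⟩, hb'a.symm, nzb⟩⟩, hc'a.symm, nzc⟩⟩
    intro i j hij
    fin_cases i <;> fin_cases j <;> first | exact absurd hij (by decide) | assumption
  have h2 : HasK5Subdivision (shortcut (shortcut Γ a' a z) b' b z) := by
    refine h3.of_shortcut ?_ ?_ hcz
    · exact shortcut_adj.2 ⟨nc, Or.inl ⟨shortcut_adj.2 ⟨nc, Or.inl ⟨hcc, ha'c.symm, hac'.symm⟩⟩,
        hb'c.symm, hbc'.symm⟩⟩
    · exact shortcut_adj.2 ⟨nzc.symm, Or.inl ⟨shortcut_adj.2 ⟨nzc.symm, Or.inl ⟨hzc.symm,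
        hac'.symm, nza⟩⟩, hbc'.symm, nzb⟩⟩
  have h1 : HasK5Subdivision (shortcut Γ a' a z) := by
    refine h2.of_shortcut ?_ ?_ hbz
    · exact shortcut_adj.2 ⟨nb, Or.inl ⟨hbb, ha'b.symm, hab'.symm⟩⟩
    · exact shortcut_adj.2 ⟨nzb.symm, Or.inl ⟨hzb.symm, hab'.symm, nza⟩⟩
  exact h1.of_shortcut haa hza.symm haz

/-! ### A triangle cut off by a planar separation -/

/-- The local structure at a triangle `abc` whose outer neighbours all lie in `S`.  `D` is the vertex
set of the planar side; the field `planar` records a planar graph `Γ` which contains a copy of all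
edges within `D` having an end outside `S`, and in which a further vertex `z` is adjacent to all
of `S`. -/
structure SepTriangle {V : Type} (G : SimpleGraph V) (D : Set V) (S : Finset V) (a b c : V) :
    Prop where
  ab : G.Adj a b
  ac : G.Adj a c
  bc : G.Adj b c
  aS : a ∉ S
  bS : b ∉ S
  cS : c ∉ S
  aD : a ∈ D
  bD : b ∈ D
  cD : c ∈ D
  SD : ∀ s ∈ S, s ∈ D
  nbr_a : ∀ w, G.Adj a w → w = b ∨ w = c ∨ w ∈ S
  nbr_b : ∀ w, G.Adj b w → w = a ∨ w = c ∨ w ∈ S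
  nbr_c : ∀ w, G.Adj c w → w = a ∨ w = b ∨ w ∈ S
  planar : ∃ (W : Type) (Γ : SimpleGraph W) (z : W) (e : V → W), IsPlanar Γ ∧
    (∀ v ∈ D, ∀ w ∈ D, v ≠ w → e v ≠ e w) ∧ (∀ v ∈ D, e v ≠ z) ∧
    (∀ v ∈ D, ∀ w ∈ D, v ∉ S → G.Adj v w → Γ.Adj (e v) (e w)) ∧ ∀ s ∈ S, Γ.Adj z (e s)

namespace SepTriangle

variable {V : Type} {G : SimpleGraph V} {D : Set V} {S : Finset V} {a b c : V}

theorem rot (h : SepTriangle G D S a b c) : SepTriangle G D S b c a :=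
  ⟨h.bc, h.ab.symm, h.ac.symm, h.bS, h.cS, h.aS, h.bD, h.cD, h.aD, h.SD,
    fun w hw => by have := h.nbr_b w hw; tauto, fun w hw => by have := h.nbr_c w hw; tauto,
    h.nbr_a, h.planar⟩

theorem exists_ne [Fintype V] (h : SepTriangle G D S a b c) (hG : IsHajos G) (s : V) :
    ∃ s' ∈ S, G.Adj a s' ∧ s' ≠ s := by
  by_contra hcon
  push Not at hcon
  refine hG.no_degree_three a b c s fun w hw => ?_
  rcases h.nbr_a w hw with h1 | h1 | h1
  · exact Or.inl h1
  · exact Or.inr (Or.inl h1)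
  · exact Or.inr (Or.inr (hcon w h1 hw))

/-- If `a` and `b` have two common outer neighbours `s`, `t`, then `c` has no outer neighbour besides
these, as otherwise there is a `K3,3`. -/
theorem third_subset (h : SepTriangle G D S a b c) {s t : V} (hs : s ∈ S) (ht : t ∈ S) (hst : s ≠ t)
    (has : G.Adj a s) (hat : G.Adj a t) (hbs : G.Adj b s) (hbt : G.Adj b t) {u : V} (hu : u ∈ S)
    (hcu : G.Adj c u) : u = s ∨ u = t := by
  by_contra hcon
  push Not at hcon
  obtain ⟨W, Γ, z, e, hΓ, inj, hz, hadj, hzS⟩ := h.planar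
  have sD := h.SD s hs
  have tD := h.SD t ht
  have uD := h.SD u hu
  have ne : ∀ {v w : V}, v ∈ S → w ∉ S → v ≠ w := fun hv hw hvw => hw (hvw ▸ hv)
  exact hΓ.2 (hasK33Subdivision_of_subdivided_edge (inj a h.aD b h.bD h.ab.ne) (hz a h.aD) (hz b h.bD)
    (hz c h.cD) (inj s sD t tD hst) (inj s sD c h.cD (ne hs h.cS)) (inj t tD c h.cD (ne ht h.cS))
    (inj u uD a h.aD (ne hu h.aS)) (inj u uD b h.bD (ne hu h.bS))
    (inj u uD s sD hcon.1) (inj u uD t tD hcon.2)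
    (hadj a h.aD s sD h.aS has) (hadj a h.aD t tD h.aS hat) (hadj a h.aD c h.cD h.aS h.ac)
    (hadj b h.bD s sD h.bS hbs) (hadj b h.bD t tD h.bS hbt) (hadj b h.bD c h.cD h.bS h.bc)
    (hzS s hs) (hzS t ht) (hzS u hu) (hadj c h.cD u uD h.cS hcu).symm)

theorem common_unique [Fintype V] (h : SepTriangle G D S a b c) (hG : IsHajos G) {s t : V}
    (hs : s ∈ S) (ht : t ∈ S) (has : G.Adj a s) (hat : G.Adj a t) (hbs : G.Adj b s)
    (hbt : G.Adj b t) : s = t := by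
  by_contra hst
  have hsub := fun u (hu : u ∈ S) (hcu : G.Adj c u) =>
    h.third_subset hs ht hst has hat hbs hbt hu hcu
  obtain ⟨p, hp, hcp, hps⟩ := h.rot.rot.exists_ne hG s
  obtain ⟨q, hq, hcq, hqt⟩ := h.rot.rot.exists_ne hG t
  have hct : G.Adj c t := (hsub p hp hcp).resolve_left hps ▸ hcp
  have hcs : G.Adj c s := (hsub q hq hcq).resolve_right hqt ▸ hcq
  obtain ⟨W, Γ, z, e, hΓ, inj, hz, hadj, hzS⟩ := h.planar
  have sD := h.SD s hs
  have tD := h.SD t ht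
  exact hΓ.1 (hasK5Subdivision_of_two_common (hz a h.aD) (hz b h.bD) (hz c h.cD)
    (inj s sD t tD hst) (hadj a h.aD b h.bD h.aS h.ab) (hadj a h.aD c h.cD h.aS h.ac)
    (hadj b h.bD c h.cD h.bS h.bc) (hadj a h.aD s sD h.aS has) (hadj a h.aD t tD h.aS hat)
    (hadj b h.bD s sD h.bS hbs) (hadj b h.bD t tD h.bS hbt) (hadj c h.cD s sD h.cS hcs)
    (hadj c h.cD t tD h.cS hct) (hzS s hs) (hzS t ht))

theorem no_triple [Fintype V] (h : SepTriangle G D S a b c) (hG : IsHajos G) {s : V}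
    (hs : s ∈ S) (has : G.Adj a s) (hbs : G.Adj b s) (hcs : G.Adj c s) : False := by
  obtain ⟨a', ha', haa, has'⟩ := h.exists_ne hG s
  obtain ⟨b', hb', hbb, hbs'⟩ := h.rot.exists_ne hG s
  obtain ⟨c', hc', hcc, hcs'⟩ := h.rot.rot.exists_ne hG s
  have hab' : a' ≠ b' := by
    rintro rfl
    exact has' (h.common_unique hG ha' hs haa has hbb hbs)
  have hbc' : b' ≠ c' := by
    rintro rfl
    exact hbs' (h.rot.common_unique hG hb' hs hbb hbs hcc hcs)
  have hac' : a' ≠ c' := by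
    rintro rfl
    exact has' (h.rot.rot.common_unique hG ha' hs hcc hcs haa has)
  obtain ⟨W, Γ, z, e, hΓ, inj, hz, hadj, hzS⟩ := h.planar
  have sD := h.SD s hs
  have aD' := h.SD a' ha'
  have bD' := h.SD b' hb'
  have cD' := h.SD c' hc'
  have ne : ∀ {v w : V}, v ∈ S → w ∉ S → v ≠ w := fun hv hw hvw => hw (hvw ▸ hv)
  exact hΓ.1 (hasK5Subdivision_of_triple_common (hz a h.aD) (hz b h.bD) (hz c h.cD)
    (hadj a h.aD b h.bD h.aS h.ab) (hadj a h.aD c h.cD h.aS h.ac) (hadj b h.bD c h.cD h.bS h.bc)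
    (hadj a h.aD s sD h.aS has) (hadj b h.bD s sD h.bS hbs) (hadj c h.cD s sD h.cS hcs) (hzS s hs)
    (hadj a h.aD a' aD' h.aS haa) (hadj b h.bD b' bD' h.bS hbb) (hadj c h.cD c' cD' h.cS hcc)
    (hzS a' ha') (hzS b' hb') (hzS c' hc')
    (inj a' aD' b' bD' hab') (inj a' aD' c' cD' hac') (inj b' bD' c' cD' hbc')
    (inj a' aD' s sD has') (inj b' bD' s sD hbs') (inj c' cD' s sD hcs')
    (inj a' aD' b h.bD (ne ha' h.bS)) (inj a' aD' c h.cD (ne ha' h.cS))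
    (inj b' bD' a h.aD (ne hb' h.aS)) (inj b' bD' c h.cD (ne hb' h.cS))
    (inj c' cD' a h.aD (ne hc' h.aS)) (inj c' cD' b h.bD (ne hc' h.bS)))

/-! ### Counting the outer neighbours -/

open Classical in
/-- The neighbours of `v` in `S`. -/
noncomputable def outer (G : SimpleGraph V) (S : Finset V) (v : V) : Finset V :=
  S.filter (G.Adj v)

theorem mem_outer {v w : V} : w ∈ outer G S v ↔ w ∈ S ∧ G.Adj v w := by
  simp [outer]

theorem two_le_outer [Fintype V] (h : SepTriangle G D S a b c) (hG : IsHajos G) :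
    2 ≤ (outer G S a).card := by
  obtain ⟨s, hs, has, -⟩ := h.exists_ne hG a
  obtain ⟨t, ht, hat, hts⟩ := h.exists_ne hG s
  exact Finset.one_lt_card.2 ⟨s, mem_outer.2 ⟨hs, has⟩, t, mem_outer.2 ⟨ht, hat⟩, hts.symm⟩

open Classical in
theorem card_outer_inter [Fintype V] (h : SepTriangle G D S a b c) (hG : IsHajos G) :
    (outer G S a ∩ outer G S b).card ≤ 1 := by
  rw [Finset.card_le_one]
  intro s hs t ht
  rw [Finset.mem_inter, mem_outer, mem_outer] at hs ht
  exact h.common_unique hG hs.1.1 ht.1.1 hs.1.2 ht.1.2 hs.2.2 ht.2.2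

open Classical in
theorem card_outer_sum (G : SimpleGraph V) (S : Finset V) (a b c : V) :
    (outer G S a).card + (outer G S b).card + (outer G S c).card ≤ S.card +
      (outer G S a ∩ outer G S b).card + (outer G S b ∩ outer G S c).card +
      (outer G S c ∩ outer G S a).card := by
  have h1 := Finset.card_union_add_card_inter (outer G S a) (outer G S b)
  have h2 := Finset.card_union_add_card_inter (outer G S a ∪ outer G S b) (outer G S c)
  have h3 : ((outer G S a ∪ outer G S b) ∩ outer G S c).card ≤
      (outer G S c ∩ outer G S a).card + (outer G S b ∩ outer G S c).card := by
    rw [Finset.union_inter_distrib_right, Finset.inter_comm (outer G S c)]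
    exact Finset.card_union_le _ _
  have h4 : (outer G S a ∪ outer G S b ∪ outer G S c).card ≤ S.card := by
    refine Finset.card_le_card fun w hw => ?_
    simp only [Finset.mem_union, mem_outer] at hw
    tauto
  omega

theorem exists_of_card_two {N : Finset V} {p : V} (hN : N.card = 2) (hp : p ∈ N) :
    ∃ q ∈ N, q ≠ p ∧ ∀ w ∈ N, w = p ∨ w = q := by
  classical
  have h1 : (N.erase p).card = 1 := by rw [Finset.card_erase_of_mem hp, hN]
  obtain ⟨q, hq⟩ := Finset.card_eq_one.1 h1
  have h2 : ∀ w, w ∈ N.erase p ↔ w = q := fun w => by rw [hq, Finset.mem_singleton]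
  have h3 := Finset.mem_erase.1 ((h2 q).2 rfl)
  refine ⟨q, h3.2, h3.1, fun w hw => ?_⟩
  by_cases hwp : w = p
  · exact Or.inl hwp
  · exact Or.inr ((h2 w).1 (Finset.mem_erase.2 ⟨hwp, hw⟩))

theorem exists_of_card_three {N : Finset V} {p q : V} (hN : N.card = 3) (hp : p ∈ N) (hq : q ∈ N)
    (hpq : p ≠ q) : ∃ r ∈ N, r ≠ p ∧ r ≠ q ∧ ∀ w ∈ N, w = p ∨ w = q ∨ w = r := by
  classical
  have h1 : (N.erase p).card = 2 := by rw [Finset.card_erase_of_mem hp, hN]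
  obtain ⟨r, hr, hrq, hall⟩ := exists_of_card_two h1 (Finset.mem_erase.2 ⟨hpq.symm, hq⟩)
  have h3 := Finset.mem_erase.1 hr
  refine ⟨r, h3.2, h3.1, hrq, fun w hw => ?_⟩
  by_cases hwp : w = p
  · exact Or.inl hwp
  · exact Or.inr (hall w (Finset.mem_erase.2 ⟨hwp, hw⟩))

/-- Two vertices of the triangle, both with exactly two outer neighbours, share none of them. -/
theorem no_two_two [Fintype V] (h : SepTriangle G D S a b c) (hG : IsHajos G)
    (ha : (outer G S a).card = 2) (hb : (outer G S b).card = 2) {r : V}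
    (hra : r ∈ outer G S a) (hrb : r ∈ outer G S b) : False := by
  obtain ⟨p, hp, hpr, hpall⟩ := exists_of_card_two ha hra
  obtain ⟨q, hq, hqr, hqall⟩ := exists_of_card_two hb hrb
  rw [mem_outer] at hra hrb hp hq
  refine hG.no_degree_four_edge a b c r p q h.ab hp.2 hq.2 ?_ ?_ ?_ ?_ ?_
  · rintro rfl
    exact hpr (h.common_unique hG hp.1 hra.1 hp.2 hra.2 hq.2 hrb.2)
  · rintro rfl
    exact h.bS hp.1
  · rintro rfl
    exact h.aS hq.1
  · intro w hw
    have := h.nbr_a w hw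
    have := fun hS => hpall w (mem_outer.2 ⟨hS, hw⟩)
    tauto
  · intro w hw
    have := h.nbr_b w hw
    have := fun hS => hqall w (mem_outer.2 ⟨hS, hw⟩)
    tauto

/-- Outer degrees `2, 3, 3`, every pair sharing a vertex. -/
theorem no_two_three_three [Fintype V] (h : SepTriangle G D S a b c) (hG : IsHajos G)
    (ha : (outer G S a).card = 2) (hb : (outer G S b).card = 3) (hc : (outer G S c).card = 3)
    {p q r : V} (hpa : p ∈ outer G S a) (hpb : p ∈ outer G S b) (hqa : q ∈ outer G S a)
    (hqc : q ∈ outer G S c) (hrb : r ∈ outer G S b) (hrc : r ∈ outer G S c) : False := by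
  have htri : ∀ s, s ∈ outer G S a → s ∈ outer G S b → s ∈ outer G S c → False := by
    intro s h1 h2 h3
    rw [mem_outer] at h1 h2 h3
    exact h.no_triple hG h1.1 h1.2 h2.2 h3.2
  have hpr : p ≠ r := by
    rintro rfl
    exact htri p hpa hpb hrc
  have hqr : q ≠ r := by
    rintro rfl
    exact htri q hqa hrb hqc
  have hqp : q ≠ p := by
    rintro rfl
    exact htri q hqa hpb hqc
  obtain ⟨x, hx, hxp, hall_a⟩ := exists_of_card_two ha hpa
  obtain ⟨b', hb', hb'p, hb'r, hall_b⟩ := exists_of_card_three hb hpb hrb hpr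
  obtain ⟨c', hc', hc'q, hc'r, hall_c⟩ := exists_of_card_three hc hqc hrc hqr
  have hqb' : q ≠ b' := by
    rintro rfl
    exact htri q hqa hb' hqc
  rw [mem_outer] at hpa hpb hqa hqc hrb hrc hb' hc'
  have ne : ∀ {v w : V}, v ∈ S → w ∉ S → v ≠ w := fun hv hw hvw => hw (hvw ▸ hv)
  have hqx : q = x := (hall_a q (mem_outer.2 hqa)).resolve_left hqp
  refine hG.no_star_triangle b c a q r p b' r c' p h.bc h.ac.symm h.ab.symm (ne hqa.1 h.bS)
    hqc.2.symm hqa.2.symm hrb.2 hpb.2 hb'.2 hrc.2 (Or.inr hpa.2) hqr hqp hqb' (ne hrb.1 h.aS)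
    (ne hpa.1 h.cS) (ne hpa.1 h.aS) (ne hb'.1 h.cS) (ne hb'.1 h.aS) ?_ ?_ ?_
  · intro w hw
    have := h.nbr_b w hw
    have := fun hS => hall_b w (mem_outer.2 ⟨hS, hw⟩)
    tauto
  · intro w hw
    have := h.nbr_c w hw
    have := fun hS => hall_c w (mem_outer.2 ⟨hS, hw⟩)
    tauto
  · intro w hw
    have := h.nbr_a w hw
    have := fun hS => hall_a w (mem_outer.2 ⟨hS, hw⟩)
    rw [← hqx] at this
    tauto

/-- Outer degrees `3, 2, 2`, where `a` shares a vertex with each of `b` and `c`. -/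
theorem no_three_two_two [Fintype V] (h : SepTriangle G D S a b c) (hG : IsHajos G)
    (ha : (outer G S a).card = 3) (hb : (outer G S b).card = 2) (hc : (outer G S c).card = 2)
    {p q : V} (hpa : p ∈ outer G S a) (hpb : p ∈ outer G S b) (hqa : q ∈ outer G S a)
    (hqc : q ∈ outer G S c) : False := by
  have htri : ∀ s, s ∈ outer G S a → s ∈ outer G S b → s ∈ outer G S c → False := by
    intro s h1 h2 h3
    rw [mem_outer] at h1 h2 h3
    exact h.no_triple hG h1.1 h1.2 h2.2 h3.2
  have hpq : p ≠ q := by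
    rintro rfl
    exact htri p hpa hpb hqc
  obtain ⟨a', ha', ha'p, ha'q, hall_a⟩ := exists_of_card_three ha hpa hqa hpq
  obtain ⟨b', hb', hb'p, hall_b⟩ := exists_of_card_two hb hpb
  obtain ⟨c', hc', hc'q, hall_c⟩ := exists_of_card_two hc hqc
  have hpc' : p ≠ c' := by
    rintro rfl
    exact htri p hpa hpb hc'
  rw [mem_outer] at hpa hpb hqa hqc ha' hb' hc'
  have ne : ∀ {v w : V}, v ∈ S → w ∉ S → v ≠ w := fun hv hw hvw => hw (hvw ▸ hv)
  refine hG.no_star_triangle c a b p q q c' q a' b' h.ac.symm h.ab h.bc.symm (ne hpa.1 h.cS)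
    hpa.2.symm hpb.2.symm hqc.2 hqc.2 hc'.2 hqa.2 (Or.inl rfl) hpq hpq hpc' (ne hqa.1 h.bS)
    (ne hqa.1 h.aS) (ne hqa.1 h.bS) (ne hc'.1 h.aS) (ne hc'.1 h.bS) ?_ ?_ ?_
  · intro w hw
    have := h.nbr_c w hw
    have := fun hS => hall_c w (mem_outer.2 ⟨hS, hw⟩)
    tauto
  · intro w hw
    have := h.nbr_a w hw
    have := fun hS => hall_a w (mem_outer.2 ⟨hS, hw⟩)
    tauto
  · intro w hw
    have := h.nbr_b w hw
    have := fun hS => hall_b w (mem_outer.2 ⟨hS, hw⟩)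
    tauto

/-- The arithmetic of the case distinction: `A`, `B`, `C` are the outer degrees and `x`, `y`, `z` the
numbers of vertices shared by the pairs `ab`, `bc`, `ca`. -/
theorem no_counts {A B C x y z : ℕ} (hA : 2 ≤ A) (hB : 2 ≤ B) (hC : 2 ≤ C) (hx : x ≤ 1) (hy : y ≤ 1)
    (hz : z ≤ 1) (hsum : A + B + C ≤ 5 + x + y + z)
    (h1 : ¬ (A = 2 ∧ B = 2 ∧ x ≠ 0)) (h2 : ¬ (B = 2 ∧ C = 2 ∧ y ≠ 0))
    (h3 : ¬ (C = 2 ∧ A = 2 ∧ z ≠ 0))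
    (h4 : ¬ (A = 2 ∧ B = 3 ∧ C = 3 ∧ x ≠ 0 ∧ y ≠ 0 ∧ z ≠ 0))
    (h5 : ¬ (B = 2 ∧ C = 3 ∧ A = 3 ∧ y ≠ 0 ∧ z ≠ 0 ∧ x ≠ 0))
    (h6 : ¬ (C = 2 ∧ A = 3 ∧ B = 3 ∧ z ≠ 0 ∧ x ≠ 0 ∧ y ≠ 0))
    (h7 : ¬ (A = 3 ∧ B = 2 ∧ C = 2 ∧ x ≠ 0 ∧ z ≠ 0))
    (h8 : ¬ (B = 3 ∧ C = 2 ∧ A = 2 ∧ y ≠ 0 ∧ x ≠ 0))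
    (h9 : ¬ (C = 3 ∧ A = 2 ∧ B = 2 ∧ z ≠ 0 ∧ y ≠ 0)) : False := by
  have hA' : A ≤ 4 := by clear h1 h2 h3 h4 h5 h6 h7 h8 h9; omega
  have hB' : B ≤ 4 := by clear h1 h2 h3 h4 h5 h6 h7 h8 h9; omega
  have hC' : C ≤ 4 := by clear h1 h2 h3 h4 h5 h6 h7 h8 h9; omega
  interval_cases A <;> interval_cases B <;> interval_cases C <;>
    simp at h1 h2 h3 h4 h5 h6 h7 h8 h9 <;> omega

/-- The outer degrees are at least two, and each pair shares at most one of the five vertices of `S`,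
so the outer degrees sum to at most eight; all possibilities left by this count are excluded. -/
theorem impossible [Fintype V] (h : SepTriangle G D S a b c) (hG : IsHajos G)
    (hS : S.card = 5) : False := by
  classical
  have hA := h.two_le_outer hG
  have hB := h.rot.two_le_outer hG
  have hC := h.rot.rot.two_le_outer hG
  have hAB := h.card_outer_inter hG
  have hBC := h.rot.card_outer_inter hG
  have hCA := h.rot.rot.card_outer_inter hG
  have hsum := card_outer_sum G S a b c
  have get : ∀ {X Y : Finset V}, (X ∩ Y).card ≠ 0 → ∃ s, s ∈ X ∧ s ∈ Y := by
    intro X Y hXY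
    obtain ⟨s, hs⟩ := Finset.card_ne_zero.1 hXY
    exact ⟨s, Finset.mem_inter.1 hs⟩
  have two : ∀ {x y z : V}, SepTriangle G D S x y z → ¬ ((outer G S x).card = 2 ∧
      (outer G S y).card = 2 ∧ (outer G S x ∩ outer G S y).card ≠ 0) := by
    rintro x y z hT ⟨hx, hy, hne⟩
    obtain ⟨s, h1, h2⟩ := get hne
    exact hT.no_two_two hG hx hy h1 h2
  have one : ∀ {x y z : V}, SepTriangle G D S x y z → ¬ ((outer G S x).card = 2 ∧
      (outer G S y).card = 3 ∧ (outer G S z).card = 3 ∧ (outer G S x ∩ outer G S y).card ≠ 0 ∧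
      (outer G S y ∩ outer G S z).card ≠ 0 ∧ (outer G S z ∩ outer G S x).card ≠ 0) := by
    rintro x y z hT ⟨hx, hy, hz, h1, h2, h3⟩
    obtain ⟨p, hp, hp'⟩ := get h1
    obtain ⟨r, hr, hr'⟩ := get h2
    obtain ⟨q, hq, hq'⟩ := get h3
    exact hT.no_two_three_three hG hx hy hz hp hp' hq' hq hr hr'
  have three : ∀ {x y z : V}, SepTriangle G D S x y z → ¬ ((outer G S x).card = 3 ∧
      (outer G S y).card = 2 ∧ (outer G S z).card = 2 ∧ (outer G S x ∩ outer G S y).card ≠ 0 ∧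
      (outer G S z ∩ outer G S x).card ≠ 0) := by
    rintro x y z hT ⟨hx, hy, hz, h1, h3⟩
    obtain ⟨p, hp, hp'⟩ := get h1
    obtain ⟨q, hq, hq'⟩ := get h3
    exact hT.no_three_two_two hG hx hy hz hp hp' hq' hq
  rw [hS] at hsum
  exact no_counts hA hB hC hAB hBC hCA hsum (two h) (two h.rot) (two h.rot.rot) (one h) (one h.rot)
    (one h.rot.rot) (three h) (three h.rot) (three h.rot.rot)

end SepTriangle

/-! ### The planar side of the separation -/

theorem apexGraph_adj_some {V : Type} {G : SimpleGraph V} {S : Set V} {u v : V} (h : G.Adj u v) :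
    (apexGraph G S).Adj (some u) (some v) := by
  rw [apexGraph, fromRel_adj]
  exact ⟨by simpa using h.ne, Or.inl (Or.inl ⟨u, v, rfl, rfl, h⟩)⟩

theorem apexGraph_adj_none {V : Type} {G : SimpleGraph V} {S : Set V} {s : V} (hs : s ∈ S) :
    (apexGraph G S).Adj none (some s) := by
  rw [apexGraph, fromRel_adj]
  exact ⟨by simp, Or.inl (Or.inr ⟨rfl, s, hs, rfl⟩)⟩

/-- Lemma 2.3: If `G` is a Hajós graph and `(G1, G2)` is a 5-separation of
`G` with `(G1, V(G1 ∩ G2))` planar, then `G1 − V(G1 ∩ G2)` is not isomorphic to `K3`. -/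
theorem statement3 {V : Type} [Fintype V] (G : SimpleGraph V) (hG : IsHajos G)
    (G1 G2 : G.Subgraph) (hsep : IsSeparation G1 G2 5)
    (hplanar : SubgraphPairPlanar G1 (G1.verts ∩ G2.verts)) :
    ¬ Nonempty ((G1.deleteVerts (G1.verts ∩ G2.verts)).coe ≃g (⊤ : SimpleGraph (Fin 3))) := by
  classical
  rintro ⟨φ⟩
  obtain ⟨hsup, -, hcard, -, -⟩ := hsep
  -- edges at private vertices of `G1` belong to `G1`
  have hedge : ∀ v w, v ∉ G2.verts → G.Adj v w → G1.Adj v w := by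
    intro v w hv hvw
    have : (G1 ⊔ G2).Adj v w := by
      rw [hsup]
      exact hvw
    rcases Subgraph.sup_adj.1 this with h | h
    · exact h
    · exact absurd (G2.edge_vert h) hv
  have hmem : ∀ i, ((φ.symm i : V) ∈ G1.verts ∧ (φ.symm i : V) ∉ G2.verts) := by
    intro i
    have : (φ.symm i : V) ∈ G1.verts \ (G1.verts ∩ G2.verts) := (φ.symm i).2
    exact ⟨this.1, fun h => this.2 ⟨this.1, h⟩⟩
  have hadj : ∀ i j, i ≠ j → G.Adj (φ.symm i) (φ.symm j) := by
    intro i j hij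
    have h : (G1.deleteVerts (G1.verts ∩ G2.verts)).coe.Adj (φ.symm i) (φ.symm j) :=
      φ.symm.map_rel_iff.2 hij
    exact (Subgraph.coe_adj_sub _ _ _ h)
  have hS : ∀ v, v ∈ (G1.verts ∩ G2.verts).toFinset ↔ v ∈ G1.verts ∧ v ∈ G2.verts := by
    intro v
    simp
  have hnbr : ∀ i w, G.Adj (φ.symm i) w →
      (∃ j, w = φ.symm j) ∨ w ∈ (G1.verts ∩ G2.verts).toFinset := by
    intro i w hw
    have hw1 : w ∈ G1.verts := G1.edge_vert (hedge _ _ (hmem i).2 hw).symm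
    by_cases hw2 : w ∈ G2.verts
    · exact Or.inr ((hS w).2 ⟨hw1, hw2⟩)
    · left
      have hwd : w ∈ (G1.deleteVerts (G1.verts ∩ G2.verts)).verts := by
        rw [Subgraph.deleteVerts_verts]
        exact ⟨hw1, fun h => hw2 h.2⟩
      exact ⟨φ ⟨w, hwd⟩, by simp⟩
  have hnot : ∀ i, (φ.symm i : V) ∉ (G1.verts ∩ G2.verts).toFinset :=
    fun i h => (hmem i).2 ((hS _).1 h).2
  have hT : SepTriangle G G1.verts (G1.verts ∩ G2.verts).toFinset
      (φ.symm 0 : V) (φ.symm 1 : V) (φ.symm 2 : V) := by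
    refine ⟨hadj 0 1 (by decide), hadj 0 2 (by decide), hadj 1 2 (by decide), hnot 0, hnot 1, hnot 2,
      (hmem 0).1, (hmem 1).1, (hmem 2).1, fun s hs => ((hS s).1 hs).1, ?_, ?_, ?_, ?_⟩
    · intro w hw
      have hne := hw.ne'
      rcases hnbr 0 w hw with ⟨j, rfl⟩ | h
      · fin_cases j <;> simp_all
      · exact Or.inr (Or.inr h)
    · intro w hw
      have hne := hw.ne'
      rcases hnbr 1 w hw with ⟨j, rfl⟩ | h
      · fin_cases j <;> simp_all
      · exact Or.inr (Or.inr h)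
    · intro w hw
      have hne := hw.ne'
      rcases hnbr 2 w hw with ⟨j, rfl⟩ | h
      · fin_cases j <;> simp_all
      · exact Or.inr (Or.inr h)
    · have he : ∀ v (hv : v ∈ G1.verts),
          (if h : v ∈ G1.verts then some (⟨v, h⟩ : G1.verts) else none) = some ⟨v, hv⟩ :=
        fun v hv => dif_pos hv
      refine ⟨Option G1.verts, _, none,
        fun v => if h : v ∈ G1.verts then some ⟨v, h⟩ else none, hplanar, ?_, ?_, ?_, ?_⟩
      · intro v hv w hw hvw
        simp only [he v hv, he w hw]
        simpa using hvw
      · intro v hv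
        simp only [he v hv]
        simp
      · intro v hv w hw hvS hvw
        simp only [he v hv, he w hw]
        exact apexGraph_adj_some (hedge v w (fun h => hvS ((hS v).2 ⟨hv, h⟩)) hvw)
      · intro s hs
        simp only [he s ((hS s).1 hs).1]
        exact apexGraph_adj_none ((hS s).1 hs)
  refine hT.impossible hG ?_
  rw [← hcard, Set.ncard_eq_toFinset_card']
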